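/- arXiv:1711.11084 — 4 statements merged into one kernel-verified Lean document; each statement's English description precedes it below -/
import Mathlib

section
/- Let R be a commutative ring, let A be an m×m matrix over R whose main diagonal sums to D_A and whose antidiagonal (entries A(i, m−1−i)) sums to D_A', and let B be an n×n matrix over R whose main diagonal sums to D_B and whose antidiagonal sums to D_B'. Then for any k ≥ 1 the aggregated compound C_A = n^k·(A ⊗ E_n) + (E_m ⊗ B) has main-diagonal sum n^(k+1)·D_A + m·D_B and antidiagonal sum n^(k+1)·D_A' + m·D_B'. In particular, if A and B are magic (both diagonal sums equal to the common line sums S_A and S_B), then both diagonals of C_A sum to the compound line sum n^(k+1)·S_A + m·S_B. -/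
open Kronecker

/-!
Summing the entries of a matrix along the graph of a map is linear in the matrix and multiplicative
on Kronecker products, the map on the product being `Prod.map σ τ`. An all-ones factor contributes
its number of rows, so both diagonals of the compound (`σ` and `τ` both the identity, or both the
index reversal) are evaluated by the same computation.
-/

section DiagonalSum

variable {R ι ι' κ κ' : Type*} [Fintype ι]

/-- The sum of the entries of `A` at the positions `(i, σ i)`: the main-diagonal sum for `σ = id`,
the antidiagonal sum for `σ = Fin.rev`, and a generalized diagonal when `σ` is a permutation. -/
def diagonalSum [AddCommMonoid R] (σ : ι → ι') (A : Matrix ι ι' R) : R :=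
  ∑ i, A i (σ i)

theorem diagonalSum_add [AddCommMonoid R] (σ : ι → ι') (A B : Matrix ι ι' R) :
    diagonalSum σ (A + B) = diagonalSum σ A + diagonalSum σ B :=
  Finset.sum_add_distrib

theorem diagonalSum_smul {S : Type*} [AddCommMonoid R] [DistribSMul S R] (σ : ι → ι') (c : S)
    (A : Matrix ι ι' R) : diagonalSum σ (c • A) = c • diagonalSum σ A :=
  Finset.smul_sum.symm

theorem diagonalSum_const [AddCommMonoid R] (σ : ι → ι') (c : R) :
    diagonalSum σ (Matrix.of fun _ _ => c) = Fintype.card ι • c :=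
  Finset.sum_const c

theorem diagonalSum_kronecker [NonUnitalNonAssocSemiring R] [Fintype κ] (σ : ι → ι') (τ : κ → κ')
    (A : Matrix ι ι' R) (B : Matrix κ κ' R) :
    diagonalSum (Prod.map σ τ) (A ⊗ₖ B) = diagonalSum σ A * diagonalSum τ B := by
  simp only [diagonalSum, Fintype.sum_mul_sum, Fintype.sum_prod_type, Matrix.kronecker_apply,
    Prod.map_apply]

end DiagonalSum

section AggregatedCompound

variable {R ι ι' κ κ' : Type*} [Semiring R] [Fintype κ]

/-- The aggregated compound `n ^ k • (A ⊗ E) + E ⊗ B`, where `E` denotes an all-ones matrix. The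
matrices may be rectangular; `n` is the number of rows of `B`. -/
def aggregatedCompound (k : ℕ) (A : Matrix ι ι' R) (B : Matrix κ κ' R) :
    Matrix (ι × κ) (ι' × κ') R :=
  (Fintype.card κ : R) ^ k • (A ⊗ₖ (Matrix.of fun _ _ => (1 : R)))
    + ((Matrix.of fun _ _ => (1 : R)) ⊗ₖ B)

theorem aggregated_compound_diagonal_sums_general [Fintype ι] (k : ℕ) (A : Matrix ι ι' R)
    (B : Matrix κ κ' R) (σ : ι → ι') (τ : κ → κ') :
    diagonalSum (Prod.map σ τ) (aggregatedCompound k A B)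
      = (Fintype.card κ : R) ^ (k + 1) * diagonalSum σ A
        + (Fintype.card ι : R) * diagonalSum τ B := by
  simp only [aggregatedCompound, diagonalSum_add, diagonalSum_smul, diagonalSum_kronecker,
    diagonalSum_const, nsmul_one, smul_eq_mul]
  rw [pow_succ, mul_assoc, (Nat.cast_commute (Fintype.card κ) (diagonalSum σ A)).eq]

end AggregatedCompound

/-- The aggregated compound `C_A = n^k • (A ⊗ E_n) + (E_m ⊗ B)` has
main-diagonal sum `n^(k+1)·D_A + m·D_B` and antidiagonal sum
`n^(k+1)·D_A' + m·D_B'`. In particular, if `A` and `B` are magic (both diagonal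
sums equal the line sums `S_A`, `S_B`), then both diagonals of `C_A` sum to the
compound line sum `n^(k+1)·S_A + m·S_B`. -/
theorem aggregated_compound_diagonal_sums
    {R : Type*} [CommRing R] {m n k : ℕ} (hk : 1 ≤ k)
    (A : Matrix (Fin m) (Fin m) R) (B : Matrix (Fin n) (Fin n) R)
    (DA DA' DB DB' : R)
    (hADiag : ∑ i, A i i = DA) (hAAnti : ∑ i, A i i.rev = DA')
    (hBDiag : ∑ p, B p p = DB) (hBAnti : ∑ p, B p p.rev = DB')
    (C : Matrix (Fin m × Fin n) (Fin m × Fin n) R)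
    (hC : C = (n : R) ^ k • (A ⊗ₖ (Matrix.of fun _ _ => (1 : R)))
            + ((Matrix.of fun _ _ => (1 : R)) ⊗ₖ B)) :
    (∑ x : Fin m × Fin n, C x x = (n : R) ^ (k + 1) * DA + (m : R) * DB) ∧
    (∑ x : Fin m × Fin n, C x (x.1.rev, x.2.rev)
        = (n : R) ^ (k + 1) * DA' + (m : R) * DB') ∧
    (∀ SA SB : R, DA = SA → DA' = SA → DB = SB → DB' = SB →
      (∑ x : Fin m × Fin n, C x x = (n : R) ^ (k + 1) * SA + (m : R) * SB) ∧
      (∑ x : Fin m × Fin n, C x (x.1.rev, x.2.rev)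
          = (n : R) ^ (k + 1) * SA + (m : R) * SB)) := by
  have sum_C (σ : Fin m → Fin m) (τ : Fin n → Fin n) :
      ∑ x : Fin m × Fin n, C x (σ x.1, τ x.2)
        = (n : R) ^ (k + 1) * ∑ i, A i (σ i) + (m : R) * ∑ p, B p (τ p) := by
    simpa only [hC, aggregatedCompound, diagonalSum, Prod.map_def, Fintype.card_fin] using
      aggregated_compound_diagonal_sums_general k A B σ τ
  have main_diagonal := hADiag ▸ hBDiag ▸ sum_C id id
  have antidiagonal := hAAnti ▸ hBAnti ▸ sum_C Fin.rev Fin.rev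
  refine ⟨main_diagonal, antidiagonal, ?_⟩
  rintro SA SB rfl hA rfl hB
  exact ⟨main_diagonal, hA ▸ hB ▸ antidiagonal⟩
end

section
/- Let F be a commutative ring, let A be an m×m matrix over F, let B be any n×n matrix over F, and let k ≥ 1. If v is a vector of length m with A·v = ν·v and ∑_i v(i) = 0, then the aggregated compound C_A = n^k·(A ⊗ E_n) + (E_m ⊗ B) satisfies C_A·(v ⊗ e_n) = (n^(k+1)·ν)·(v ⊗ e_n). That is, v ⊗ e_n is an eigenvector of the aggregated compound with eigenvalue n^(k+1)·ν. -/
open Kronecker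

section

open Matrix

variable {l m n p R : Type*} [Fintype m] [Fintype p]

theorem kronecker_of_one_mulVec_comp_fst [NonAssocSemiring R] (A : Matrix l m R) (v : m → R) :
    (A ⊗ₖ (of fun _ _ => 1 : Matrix n p R)) *ᵥ (v ∘ Prod.fst) =
      Fintype.card p • ((A *ᵥ v) ∘ Prod.fst) := by
  ext ⟨i, a⟩
  simp [mulVec, dotProduct, Fintype.sum_prod_type, Finset.mul_sum]

theorem of_one_kronecker_mulVec_comp_fst [NonAssocSemiring R] (B : Matrix n p R) (v : m → R) :
    ((of fun _ _ => 1 : Matrix l m R) ⊗ₖ B) *ᵥ (v ∘ Prod.fst) =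
      fun ia => (B *ᵥ 1) ia.2 * ∑ j, v j := by
  ext ⟨i, a⟩
  simp [mulVec, dotProduct, Fintype.sum_prod_type_right, Finset.sum_mul_sum]

theorem aggregated_compound_eigenvector_from_A_general [Semiring R] (c : R) (A : Matrix m m R)
    (B : Matrix p p R) (v : m → R) (ν : R) (hv : A *ᵥ v = ν • v) (hsum : ∑ i, v i = 0) :
    (c • (A ⊗ₖ (of fun _ _ => 1)) + (of fun _ _ => 1) ⊗ₖ B) *ᵥ (v ∘ Prod.fst) =
      (c * Fintype.card p * ν) • (v ∘ Prod.fst) := by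
  have hA : (A ⊗ₖ (of fun _ _ => 1 : Matrix p p R)) *ᵥ (v ∘ Prod.fst) =
      (Fintype.card p * ν) • (v ∘ Prod.fst) := by
    rw [kronecker_of_one_mulVec_comp_fst, hv, Pi.smul_comp, ← Nat.cast_smul_eq_nsmul R, smul_smul]
  have hB : ((of fun _ _ => 1 : Matrix m m R) ⊗ₖ B) *ᵥ (v ∘ Prod.fst) = 0 := by
    ext
    simp only [of_one_kronecker_mulVec_comp_fst, hsum, mul_zero, Pi.zero_apply]
  rw [add_mulVec, smul_mulVec, hA, hB, add_zero, smul_smul, mul_assoc]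

end

/-- If `A·v = ν·v` with the entries of `v` summing to zero, then
`v ⊗ e_n` is an eigenvector of the aggregated compound
`C_A = n^k • (A ⊗ E_n) + (E_m ⊗ B)` with eigenvalue `n^(k+1)·ν`. -/
theorem aggregated_compound_eigenvector_from_A
    {F : Type*} [CommRing F] {m n k : ℕ} (hk : 1 ≤ k)
    (A : Matrix (Fin m) (Fin m) F) (B : Matrix (Fin n) (Fin n) F)
    (v : Fin m → F) (ν : F)
    (hv : A.mulVec v = ν • v) (hsum : ∑ i, v i = 0)
    (C : Matrix (Fin m × Fin n) (Fin m × Fin n) F)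
    (hC : C = (n : F) ^ k • (A ⊗ₖ (Matrix.of fun _ _ => (1 : F)))
            + ((Matrix.of fun _ _ => (1 : F)) ⊗ₖ B)) :
    C.mulVec (fun ip : Fin m × Fin n => v ip.1)
      = ((n : F) ^ (k + 1) * ν) • fun ip : Fin m × Fin n => v ip.1 := by
  have h := aggregated_compound_eigenvector_from_A_general ((n : F) ^ k) A B v ν hv hsum
  rwa [Fintype.card_fin, ← pow_succ, ← hC] at h
end

section
/- Let F be a commutative ring, A an m×m matrix, B an n×n matrix over F, k ≥ 1, and let C_D = (A ⊗ E_n) + m^k·(E_m ⊗ B) be the dispersed compound. (i) If u is a vector of length n with B·u = μ·u and ∑_p u(p) = 0, then C_D·(e_m ⊗ u) = (m^(k+1)·μ)·(e_m ⊗ u). (ii) If v is a vector of length m with A·v = ν·v and ∑_i v(i) = 0, then C_D·(v ⊗ e_n) = (n·ν)·(v ⊗ e_n). Thus the non-dominant eigenvalues of the dispersed compound arising from B and A are m^(k+1)·μ and n·ν respectively. -/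
open Kronecker

/-!
A Kronecker factor with all entries `1` sums a vector over the corresponding index. This sum
annihilates a zero-sum factor and multiplies a constant factor by its length, so on `e ⊗ u` and on
`v ⊗ e` one summand of the dispersed compound vanishes while the other acts through `B` or `A`.
-/

section AllOnesKronecker

variable {R k l m n : Type*} [NonAssocSemiring R] [Fintype m] [Fintype n]

theorem kronecker_ones_mulVec (A : Matrix k m R) (x : m × n → R) :
    (A ⊗ₖ (Matrix.of fun (_ : l) (_ : n) => (1 : R))).mulVec x
      = A.mulVec (fun j => ∑ q, x (j, q)) ∘ Prod.fst := by
  ext ⟨i, p⟩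
  simp only [Matrix.mulVec, dotProduct, Matrix.kronecker_apply, Matrix.of_apply, mul_one,
    Fintype.sum_prod_type, Finset.mul_sum, Function.comp_apply]

theorem ones_kronecker_mulVec (B : Matrix l n R) (x : m × n → R) :
    ((Matrix.of fun (_ : k) (_ : m) => (1 : R)) ⊗ₖ B).mulVec x
      = B.mulVec (fun q => ∑ j, x (j, q)) ∘ Prod.snd := by
  ext ⟨i, p⟩
  simp only [Matrix.mulVec, dotProduct, Matrix.kronecker_apply, Matrix.of_apply, one_mul,
    Fintype.sum_prod_type_right, Finset.mul_sum, Function.comp_apply]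

theorem kronecker_ones_mulVec_comp_snd (A : Matrix k m R) {u : n → R} (hu : ∑ q, u q = 0) :
    (A ⊗ₖ (Matrix.of fun (_ : l) (_ : n) => (1 : R))).mulVec (u ∘ Prod.snd) = 0 := by
  have fiber_sum : (fun _ : m => ∑ q, u q) = 0 := funext fun _ => hu
  simp only [kronecker_ones_mulVec, Function.comp_apply, fiber_sum, Matrix.mulVec_zero,
    Pi.zero_comp]

theorem ones_kronecker_mulVec_comp_fst (B : Matrix l n R) {v : m → R} (hv : ∑ j, v j = 0) :
    ((Matrix.of fun (_ : k) (_ : m) => (1 : R)) ⊗ₖ B).mulVec (v ∘ Prod.fst) = 0 := by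
  have fiber_sum : (fun _ : n => ∑ j, v j) = 0 := funext fun _ => hv
  simp only [ones_kronecker_mulVec, Function.comp_apply, fiber_sum, Matrix.mulVec_zero,
    Pi.zero_comp]

theorem kronecker_ones_mulVec_comp_fst (A : Matrix k m R) (v : m → R) :
    (A ⊗ₖ (Matrix.of fun (_ : l) (_ : n) => (1 : R))).mulVec (v ∘ Prod.fst)
      = Fintype.card n • (A.mulVec v ∘ Prod.fst) := by
  have fiber_sum : (fun j => ∑ _ : n, v j) = Fintype.card n • v :=
    funext fun _ => Finset.sum_const _
  simp only [kronecker_ones_mulVec, Function.comp_apply, fiber_sum, Matrix.mulVec_smul,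
    Pi.smul_comp]

theorem ones_kronecker_mulVec_comp_snd (B : Matrix l n R) (u : n → R) :
    ((Matrix.of fun (_ : k) (_ : m) => (1 : R)) ⊗ₖ B).mulVec (u ∘ Prod.snd)
      = Fintype.card m • (B.mulVec u ∘ Prod.snd) := by
  have fiber_sum : (fun q => ∑ _ : m, u q) = Fintype.card m • u :=
    funext fun _ => Finset.sum_const _
  simp only [ones_kronecker_mulVec, Function.comp_apply, fiber_sum, Matrix.mulVec_smul,
    Pi.smul_comp]

end AllOnesKronecker

theorem dispersed_compound_eigenvectors_general
    {R m n : Type*} [Semiring R] [Fintype m] [Fintype n]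
    (A : Matrix m m R) (B : Matrix n n R) (c : R) (C : Matrix (m × n) (m × n) R)
    (hC : C = (A ⊗ₖ (Matrix.of fun _ _ => (1 : R)))
            + c • ((Matrix.of fun _ _ => (1 : R)) ⊗ₖ B)) :
    (∀ (u : n → R) (μ : R), B.mulVec u = μ • u → ∑ p, u p = 0 →
      C.mulVec (u ∘ Prod.snd) = (c * Fintype.card m * μ) • (u ∘ Prod.snd)) ∧
    (∀ (v : m → R) (ν : R), A.mulVec v = ν • v → ∑ i, v i = 0 →
      C.mulVec (v ∘ Prod.fst) = (Fintype.card n * ν) • (v ∘ Prod.fst)) := by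
  subst hC
  refine ⟨fun u μ hBu hu => ?_, fun v ν hAv hv => ?_⟩
  · calc
      _ = c • (Fintype.card m • (B.mulVec u ∘ Prod.snd)) := by
        rw [Matrix.add_mulVec, Matrix.smul_mulVec, kronecker_ones_mulVec_comp_snd A hu, zero_add,
          ones_kronecker_mulVec_comp_snd]
      _ = (c * Fintype.card m * μ) • (u ∘ Prod.snd) := by
        rw [hBu, Pi.smul_comp, ← Nat.cast_smul_eq_nsmul R, mul_smul, mul_smul]
  · calc
      _ = Fintype.card n • (A.mulVec v ∘ Prod.fst) := by
        rw [Matrix.add_mulVec, Matrix.smul_mulVec, ones_kronecker_mulVec_comp_fst B hv, smul_zero,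
          add_zero, kronecker_ones_mulVec_comp_fst]
      _ = (Fintype.card n * ν) • (v ∘ Prod.fst) := by
        rw [hAv, Pi.smul_comp, ← Nat.cast_smul_eq_nsmul R, mul_smul]

/-- Eigenvectors of the dispersed compound
`C_D = (A ⊗ E_n) + m^k • (E_m ⊗ B)`:
(i) if `B·u = μ·u` with `∑ u = 0` then `e_m ⊗ u` is an eigenvector with
eigenvalue `m^(k+1)·μ`; (ii) if `A·v = ν·v` with `∑ v = 0` then `v ⊗ e_n` is an
eigenvector with eigenvalue `n·ν`. -/
theorem dispersed_compound_eigenvectors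
    {F : Type*} [CommRing F] {m n k : ℕ} (hk : 1 ≤ k)
    (A : Matrix (Fin m) (Fin m) F) (B : Matrix (Fin n) (Fin n) F)
    (C : Matrix (Fin m × Fin n) (Fin m × Fin n) F)
    (hC : C = (A ⊗ₖ (Matrix.of fun _ _ => (1 : F)))
            + (m : F) ^ k • ((Matrix.of fun _ _ => (1 : F)) ⊗ₖ B)) :
    (∀ (u : Fin n → F) (μ : F), B.mulVec u = μ • u → ∑ p, u p = 0 →
      C.mulVec (fun ip : Fin m × Fin n => u ip.2)
        = ((m : F) ^ (k + 1) * μ) • fun ip : Fin m × Fin n => u ip.2) ∧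
    (∀ (v : Fin m → F) (ν : F), A.mulVec v = ν • v → ∑ i, v i = 0 →
      C.mulVec (fun ip : Fin m × Fin n => v ip.1)
        = ((n : F) * ν) • fun ip : Fin m × Fin n => v ip.1) := by
  simpa only [Fintype.card_fin, ← pow_succ, Function.comp_def] using
    dispersed_compound_eigenvectors_general A B ((m : F) ^ k) C hC
end

section
/- Let F be a commutative ring and let A (m×m) and B (n×n) be matrices over F, with the GAPDA compound defined by C_G = (A ⊗ E_n) + (E_m ⊗ B). Then: (i) if every row and column sum of A equals S_A and every row and column sum of B equals S_B, then C_G·e_{mn} = (n·S_A + m·S_B)·e_{mn}, and indeed every row and column sum of C_G equals n·S_A + m·S_B; (ii) if B·u = μ·u with ∑_p u(p) = 0, then C_G·(e_m ⊗ u) = (m·μ)·(e_m ⊗ u); (iii) if A·v = ν·v with ∑_i v(i) = 0, then C_G·(v ⊗ e_n) = (n·ν)·(v ⊗ e_n). -/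
open Kronecker

/-!
The compound `C` of `A` and `B` has entries `A i j + B k q`, so it sees a vector `x` on the product
index only through its two marginals: the `(i, k)` entry of `C x` is the `i` entry of `A` applied to
`j ↦ ∑ q, x (j, q)` plus the `k` entry of `B` applied to `q ↦ ∑ j, x (j, q)`. The marginals of `e`
are constant, while those of `e ⊗ u` are the constant `∑ u` and a multiple of `u`; when `∑ u = 0`,
only the action of `B` survives.
-/

section GapdaCompound

open scoped Matrix

variable {l m n p R : Type*}

/-- The GAPDA compound `A ⊗ E + E ⊗ B`, where `E` denotes an all-ones matrix. The matrices may be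
rectangular, each `E` having the shape of the other factor. -/
def gapdaCompound [Add R] [Mul R] [One R] (A : Matrix l m R) (B : Matrix n p R) :
    Matrix (l × n) (m × p) R :=
  A ⊗ₖ Matrix.of (fun _ _ ↦ 1) + Matrix.of (fun _ _ ↦ 1) ⊗ₖ B

theorem gapdaCompound_apply [Add R] [MulOneClass R] (A : Matrix l m R) (B : Matrix n p R)
    (r : l × n) (c : m × p) : gapdaCompound A B r c = A r.1 c.1 + B r.2 c.2 := by
  simp [gapdaCompound]

theorem transpose_gapdaCompound [Add R] [Mul R] [One R] (A : Matrix l m R) (B : Matrix n p R) :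
    (gapdaCompound A B)ᵀ = gapdaCompound Aᵀ Bᵀ :=
  rfl

variable [Fintype m] [Fintype p] [NonAssocSemiring R] (A : Matrix l m R) (B : Matrix n p R)

theorem gapdaCompound_mulVec_apply (x : m × p → R) (r : l × n) :
    (gapdaCompound A B *ᵥ x) r =
      (A *ᵥ fun j ↦ ∑ q, x (j, q)) r.1 + (B *ᵥ fun q ↦ ∑ j, x (j, q)) r.2 := by
  simp only [Matrix.mulVec, dotProduct, gapdaCompound_apply, add_mul, Finset.sum_add_distrib,
    Finset.mul_sum]
  congr 1
  · exact Fintype.sum_prod_type _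
  · exact Fintype.sum_prod_type_right _

theorem gapdaCompound_mulVec_one :
    (gapdaCompound A B *ᵥ fun _ ↦ 1) =
      fun r ↦ Fintype.card p * ∑ j, A r.1 j + Fintype.card m * ∑ q, B r.2 q := by
  ext r
  have fst_marginal : (fun _ : m ↦ ∑ _q : p, (1 : R)) = Fintype.card p • 1 := by
    ext
    simp
  have snd_marginal : (fun _ : p ↦ ∑ _j : m, (1 : R)) = Fintype.card m • 1 := by
    ext
    simp
  rw [gapdaCompound_mulVec_apply, fst_marginal, snd_marginal, Matrix.mulVec_smul,
    Matrix.mulVec_smul]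
  simp [Matrix.mulVec, dotProduct]

theorem gapdaCompound_row_sum (r : l × n) :
    ∑ c, gapdaCompound A B r c =
      Fintype.card p * ∑ j, A r.1 j + Fintype.card m * ∑ q, B r.2 q := by
  simpa [Matrix.mulVec, dotProduct] using congrFun (gapdaCompound_mulVec_one A B) r

theorem gapdaCompound_col_sum (A : Matrix m l R) (B : Matrix p n R) (c : l × n) :
    ∑ r, gapdaCompound A B r c =
      Fintype.card p * ∑ i, A i c.1 + Fintype.card m * ∑ k, B k c.2 := by
  simpa [← transpose_gapdaCompound] using gapdaCompound_row_sum Aᵀ Bᵀ c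

theorem gapdaCompound_mulVec_snd_of_sum_eq_zero {u : p → R} (hu : ∑ q, u q = 0) :
    (gapdaCompound A B *ᵥ fun c ↦ u c.2) = (Fintype.card m : R) • fun r ↦ (B *ᵥ u) r.2 := by
  ext r
  have snd_marginal : (fun q ↦ ∑ _j : m, u q) = Fintype.card m • u := by
    ext q
    simp
  have fst_marginal : (fun _ : m ↦ ∑ q, u q) = 0 := funext fun _ ↦ hu
  rw [gapdaCompound_mulVec_apply, fst_marginal, snd_marginal, Matrix.mulVec_zero,
    Matrix.mulVec_smul]
  simp

theorem gapdaCompound_mulVec_fst_of_sum_eq_zero {v : m → R} (hv : ∑ j, v j = 0) :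
    (gapdaCompound A B *ᵥ fun c ↦ v c.1) = (Fintype.card p : R) • fun r ↦ (A *ᵥ v) r.1 := by
  ext r
  have fst_marginal : (fun j ↦ ∑ _q : p, v j) = Fintype.card p • v := by
    ext j
    simp
  have snd_marginal : (fun _ : p ↦ ∑ j, v j) = 0 := funext fun _ ↦ hv
  rw [gapdaCompound_mulVec_apply, fst_marginal, snd_marginal, Matrix.mulVec_zero,
    Matrix.mulVec_smul]
  simp

theorem gapda_compound_properties_general (A : Matrix m m R) (B : Matrix p p R) :
    (∀ SA SB : R,
      (∀ i, ∑ j, A i j = SA) → (∀ j, ∑ i, A i j = SA) →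
      (∀ k, ∑ q, B k q = SB) → (∀ q, ∑ k, B k q = SB) →
      (gapdaCompound A B *ᵥ fun _ ↦ 1) =
          (Fintype.card p * SA + Fintype.card m * SB : R) • (fun _ ↦ 1) ∧
        (∀ r, ∑ c, gapdaCompound A B r c = Fintype.card p * SA + Fintype.card m * SB) ∧
        (∀ c, ∑ r, gapdaCompound A B r c = Fintype.card p * SA + Fintype.card m * SB)) ∧
    (∀ (u : p → R) (μ : R), B *ᵥ u = μ • u → ∑ q, u q = 0 →
      (gapdaCompound A B *ᵥ fun c ↦ u c.2) = (Fintype.card m * μ : R) • fun r ↦ u r.2) ∧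
    (∀ (v : m → R) (ν : R), A *ᵥ v = ν • v → ∑ j, v j = 0 →
      (gapdaCompound A B *ᵥ fun c ↦ v c.1) = (Fintype.card p * ν : R) • fun r ↦ v r.1) := by
  refine ⟨fun SA SB hArow hAcol hBrow hBcol ↦ ⟨?_, fun r ↦ ?_, fun c ↦ ?_⟩,
    fun u μ hBu hu ↦ ?_, fun v ν hAv hv ↦ ?_⟩
  · rw [gapdaCompound_mulVec_one]
    ext r
    simp [hArow, hBrow]
  · rw [gapdaCompound_row_sum, hArow, hBrow]
  · rw [gapdaCompound_col_sum, hAcol, hBcol]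
  · rw [gapdaCompound_mulVec_snd_of_sum_eq_zero A B hu, hBu]
    ext r
    simp only [Pi.smul_apply, smul_eq_mul, ← nsmul_eq_mul, smul_mul_assoc]
  · rw [gapdaCompound_mulVec_fst_of_sum_eq_zero A B hv, hAv]
    ext r
    simp only [Pi.smul_apply, smul_eq_mul, ← nsmul_eq_mul, smul_mul_assoc]

end GapdaCompound

/-- Properties of the GAPDA compound `C_G = (A ⊗ E_n) + (E_m ⊗ B)`:
(i) if `A` and `B` are doubly affine with line sums `S_A`, `S_B`, then
`C_G·e_{mn} = (n·S_A + m·S_B)·e_{mn}` and every row and column sum of `C_G`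
equals `n·S_A + m·S_B`; (ii) if `B·u = μ·u` with `∑ u = 0`, then
`C_G·(e_m ⊗ u) = m·μ·(e_m ⊗ u)`; (iii) if `A·v = ν·v` with `∑ v = 0`, then
`C_G·(v ⊗ e_n) = n·ν·(v ⊗ e_n)`. -/
theorem gapda_compound_properties
    {F : Type*} [CommRing F] {m n : ℕ}
    (A : Matrix (Fin m) (Fin m) F) (B : Matrix (Fin n) (Fin n) F)
    (C : Matrix (Fin m × Fin n) (Fin m × Fin n) F)
    (hC : C = (A ⊗ₖ ((Matrix.of fun _ _ => (1 : F)) : Matrix (Fin n) (Fin n) F))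
            + (((Matrix.of fun _ _ => (1 : F)) : Matrix (Fin m) (Fin m) F) ⊗ₖ B)) :
    (∀ SA SB : F,
      (∀ i, ∑ j, A i j = SA) → (∀ j, ∑ i, A i j = SA) →
      (∀ p, ∑ q, B p q = SB) → (∀ q, ∑ p, B p q = SB) →
      (C.mulVec (fun _ : Fin m × Fin n => (1 : F))
          = ((n : F) * SA + (m : F) * SB) • fun _ : Fin m × Fin n => (1 : F)) ∧
      (∀ r : Fin m × Fin n,
          ∑ c : Fin m × Fin n, C r c = (n : F) * SA + (m : F) * SB) ∧
      (∀ c : Fin m × Fin n,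
          ∑ r : Fin m × Fin n, C r c = (n : F) * SA + (m : F) * SB)) ∧
    (∀ (u : Fin n → F) (μ : F), B.mulVec u = μ • u → ∑ p, u p = 0 →
      C.mulVec (fun ip : Fin m × Fin n => u ip.2)
        = ((m : F) * μ) • fun ip : Fin m × Fin n => u ip.2) ∧
    (∀ (v : Fin m → F) (ν : F), A.mulVec v = ν • v → ∑ i, v i = 0 →
      C.mulVec (fun ip : Fin m × Fin n => v ip.1)
        = ((n : F) * ν) • fun ip : Fin m × Fin n => v ip.1) := by
  obtain rfl : C = gapdaCompound A B := hC
  simpa only [Fintype.card_fin] using gapda_compound_properties_general A B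
end
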